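/- arXiv:2509.10716 — 3 statements merged into one kernel-verified Lean document; each statement's English description precedes it below -/
import Mathlib

section
/- Let α : ℝ → ℝ be an extended class-K function and let y : ℝ → ℝ be differentiable with y(0) ≥ 0 and y'(t) ≥ −α(y(t)) for all t ≥ 0. Then y(t) ≥ 0 for all t ≥ 0. (Scalar comparison lemma underlying the forward-invariance guarantee of control barrier functions.) -/
/-- `α : ℝ → ℝ` is of extended class-K if it is continuous, strictly
increasing, and vanishes at the origin. -/
def IsClassKe (α : ℝ → ℝ) : Prop :=
  Continuous α ∧ StrictMono α ∧ α 0 = 0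

/-- Scalar comparison lemma: if `y` is differentiable, starts nonnegative,
and satisfies `y'(t) ≥ -α(y(t))` for all `t ≥ 0` with `α` of extended
class-K, then `y(t) ≥ 0` for all `t ≥ 0`. -/
theorem comparison_lemma_classKe (α : ℝ → ℝ) (hα : IsClassKe α)
    (y : ℝ → ℝ) (hy : Differentiable ℝ y) (h0 : 0 ≤ y 0)
    (hineq : ∀ t, 0 ≤ t → -α (y t) ≤ deriv y t) :
    ∀ t, 0 ≤ t → 0 ≤ y t := by
  intro t ht
  obtain ⟨-, hmono, hzero⟩ := hα
  -- For every `ε > 0` the constant `ε` is a strict barrier for `-y`: wherever `-y = ε`,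
  -- one has `(-y)' ≤ α (-ε) < 0`, so `-y` never rises above `ε`.
  refine le_of_forall_pos_le_add fun ε hε => ?_
  have key : -y t ≤ ε :=
    image_le_of_deriv_right_lt_deriv_boundary' (f := fun s => -y s) (f' := fun s => -deriv y s)
      (B := fun _ => ε) (B' := fun _ => 0) (a := 0) (b := t)
      hy.continuous.neg.continuousOn
      (fun s _ => (hy s).hasDerivAt.neg.hasDerivWithinAt)
      (by linarith) continuousOn_const
      (fun s _ => hasDerivWithinAt_const s _ ε)
      (fun s hs hsε => by
        have hys : y s < 0 := by linarith
        have hneg := hmono hys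
        have hd := hineq s hs.1
        linarith)
      ⟨ht, le_rfl⟩
  linarith
end

section
/- (Combinatorial safety, trajectory form of Theorem 1.) Let p ≥ 1, 1 ≤ r ≤ p, let α : ℝ → ℝ be an extended class-K function, and let g_1,…,g_p : ℝ → ℝ be differentiable. Define the pivot m(t) = max^r{g_k(t)}_{k=1}^p (the r-th largest of the p values at time t). Assume m(0) ≥ 0 and that for all t ≥ 0 and all k ∈ {1,…,p}: g_k'(t) ≥ −α( m(t) + |g_k(t) − m(t)| ). Then m(t) ≥ 0 for all t ≥ 0; equivalently, at every time t ≥ 0 there exist at least r indices k with g_k(t) ≥ 0. -/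
/-!
The `r`-th largest value is `≥ c` exactly when at least `r` of the values are `≥ c`
(`le_kthLargest_iff`). Hence, for fixed `c < 0`, the set of times with `c ≤ m t` is closed, being
a finite union over index sets of cardinality `≥ r` of closed sets `{t | ∀ k ∈ T, c ≤ g k t}`.

This set also extends to the right of each of its points `s`: among the (at least `r`) indices
with `m s ≤ g k s`, either `g k s > c`, which persists by continuity, or `g k s = m s = c`, and
then the barrier condition reads `g k' s ≥ -α c > 0`, so `g k` increases through `c`.
Since it contains `0`, it contains all of `[0, ∞)`; letting `c` increase to `0` gives `m t ≥ 0`.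
-/

/-- The list of values of `f : Fin p → ℝ` sorted in nondecreasing order
(counted with multiplicity). -/
noncomputable def sortedVals {p : ℕ} (f : Fin p → ℝ) : List ℝ :=
  (Finset.univ.val.map f).sort (· ≤ ·)

/-- `max^r f`: the `r`-th largest value of the family `f` (1-indexed). -/
noncomputable def kthLargest {p : ℕ} (f : Fin p → ℝ) (r : ℕ) : ℝ :=
  (sortedVals f).getD (p - r) 0

/-- Threshold characterisation of order statistics: `max^r f ≥ c` iff at least `r` entries are
`≥ c`. -/
theorem le_kthLargest_iff {p : ℕ} (f : Fin p → ℝ) {r : ℕ} (hr1 : 1 ≤ r) (hrp : r ≤ p) (c : ℝ) :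
    c ≤ kthLargest f r ↔ r ≤ (Finset.univ.filter (fun k : Fin p => c ≤ f k)).card := by
  have hlen : (sortedVals f).length = p := by simp [sortedVals]
  have hsort : (sortedVals f).Pairwise (· ≤ ·) := Multiset.pairwise_sort _ _
  have hcount : (Finset.univ.filter (fun k : Fin p => c ≤ f k)).card
      = (sortedVals f).countP (fun x => decide (c ≤ x)) := by
    rw [← Multiset.coe_countP (fun x => c ≤ x)]
    simp only [sortedVals, Multiset.sort_eq, Multiset.countP_map]
    rfl
  rw [hcount]
  unfold kthLargest
  generalize sortedVals f = l at hlen hsort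
  have hi : p - r < l.length := by omega
  rw [List.getD_eq_getElem _ _ hi]
  rw [List.pairwise_iff_getElem] at hsort
  constructor
  · intro hc
    -- the last `r` entries are all `≥ c`
    have h1 : (l.drop (p - r)).countP (fun x => decide (c ≤ x)) = (l.drop (p - r)).length := by
      rw [List.countP_eq_length]
      intro x hx
      obtain ⟨j, hj, rfl⟩ := List.mem_iff_getElem.1 hx
      rw [List.getElem_drop]
      rw [decide_eq_true_iff]
      rcases Nat.eq_zero_or_pos j with rfl | hj0
      · simpa using hc
      · exact hc.trans (hsort _ _ hi (by simp at hj; omega) (by omega))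
    have h2 := (List.drop_sublist (p - r) l).countP_le (p := fun x => decide (c ≤ x))
    rw [h1, List.length_drop] at h2
    omega
  · intro hr
    by_contra! hc
    -- the first `p - r + 1` entries are all `< c`
    have h1 : (l.take (p - r + 1)).countP (fun x => decide (c ≤ x)) = 0 := by
      rw [List.countP_eq_zero]
      intro x hx
      obtain ⟨j, hj, rfl⟩ := List.mem_iff_getElem.1 hx
      rw [List.getElem_take]
      rw [decide_eq_true_iff, not_le]
      have hj' : j < p - r + 1 := by simp at hj; omega
      rcases Nat.lt_or_ge j (p - r) with h | h
      · exact (hsort _ _ (by omega) hi h).trans_lt hc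
      · obtain rfl : j = p - r := by omega
        exact hc
    have h2 : l.countP (fun x => decide (c ≤ x))
        = (l.take (p - r + 1)).countP (fun x => decide (c ≤ x))
          + (l.drop (p - r + 1)).countP (fun x => decide (c ≤ x)) := by
      rw [← List.countP_append, List.take_append_drop]
    have h3 := List.countP_le_length (p := fun x => decide (c ≤ x)) (l := l.drop (p - r + 1))
    rw [List.length_drop] at h3
    omega

theorem eventually_right_lt_of_deriv_pos {f : ℝ → ℝ} {s : ℝ} (hf : DifferentiableAt ℝ f s)
    (hd : 0 < deriv f s) : ∀ᶠ x in nhdsWithin s (Set.Ioi s), f s < f x := by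
  have h := (hasDerivAt_iff_tendsto_slope.1 hf.hasDerivAt).eventually (lt_mem_nhds hd)
  have h' := h.filter_mono (nhdsWithin_mono s (fun x (hx : s < x) => hx.ne'))
  filter_upwards [h', self_mem_nhdsWithin] with x hx hsx
  have hsx' : 0 < x - s := sub_pos.2 hsx
  rw [slope_def_field, div_pos_iff_of_pos_right hsx'] at hx
  linarith

theorem isClosed_setOf_le_kthLargest {p : ℕ} {r : ℕ} (hr1 : 1 ≤ r) (hrp : r ≤ p)
    (g : Fin p → ℝ → ℝ) (hg : ∀ k, Continuous (g k)) (c : ℝ) :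
    IsClosed {t | c ≤ kthLargest (fun k => g k t) r} := by
  have heq : {t | c ≤ kthLargest (fun k => g k t) r}
      = ⋃ T ∈ {T : Finset (Fin p) | r ≤ T.card}, ⋂ k ∈ T, {t | c ≤ g k t} := by
    ext t
    simp only [Set.mem_ofPred_eq, Set.mem_iUnion, Set.mem_iInter, exists_prop]
    rw [le_kthLargest_iff _ hr1 hrp]
    constructor
    · intro h
      exact ⟨_, h, fun k hk => (Finset.mem_filter.1 hk).2⟩
    · rintro ⟨T, hT, h⟩
      exact hT.trans (Finset.card_le_card fun k hk =>
        Finset.mem_filter.2 ⟨Finset.mem_univ k, h k hk⟩)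
  rw [heq]
  refine Set.Finite.isClosed_biUnion (Set.toFinite _) fun T _ => ?_
  exact isClosed_biInter fun k _ => isClosed_le continuous_const (hg k)

/-- Combinatorial safety (trajectory form of Theorem 1): under the
`p`-choose-`r` CBF condition with pivot `m(t) = max^r {g_k(t)}`, if
`m(0) ≥ 0` then `m(t) ≥ 0` for all `t ≥ 0`; equivalently, at every time
at least `r` of the primitive values are nonnegative. -/
theorem combinatorial_safety {p : ℕ} (hp : 1 ≤ p) (r : ℕ)
    (hr1 : 1 ≤ r) (hrp : r ≤ p)
    (α : ℝ → ℝ) (hα : IsClassKe α)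
    (g : Fin p → ℝ → ℝ) (hg : ∀ k, Differentiable ℝ (g k))
    (m : ℝ → ℝ) (hm : m = fun t => kthLargest (fun k => g k t) r)
    (h0 : 0 ≤ m 0)
    (hineq : ∀ t, 0 ≤ t → ∀ k : Fin p,
      -α (m t + |g k t - m t|) ≤ deriv (g k) t) :
    ∀ t, 0 ≤ t →
      0 ≤ m t ∧
      r ≤ (Finset.univ.filter (fun k : Fin p => 0 ≤ g k t)).card := by
  obtain ⟨-, hmono, hα0⟩ := hα
  have hiff : ∀ c t, c ≤ m t ↔ r ≤ (Finset.univ.filter (fun k : Fin p => c ≤ g k t)).card := by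
    intro c t
    rw [hm]
    exact le_kthLargest_iff _ hr1 hrp c
  have key : ∀ c < 0, ∀ t, 0 ≤ t → c ≤ m t := by
    intro c hc t ht
    have hclosed : IsClosed {t | c ≤ m t} := by
      rw [hm]
      exact isClosed_setOf_le_kthLargest hr1 hrp g (fun k => (hg k).continuous) c
    have hsub : Set.Icc 0 t ⊆ {t | c ≤ m t} := by
      refine (hclosed.inter isClosed_Icc).Icc_subset_of_forall_mem_nhdsWithin
        (hc.le.trans h0) ?_
      rintro s ⟨hs, hs0, -⟩
      -- the `r` indices lying at or above the pivot at time `s` stay `≥ c` just after `s`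
      have hev : ∀ k ∈ Finset.univ.filter (fun k : Fin p => m s ≤ g k s),
          ∀ᶠ x in nhdsWithin s (Set.Ioi s), c ≤ g k x := by
        intro k hk
        have hk' : m s ≤ g k s := (Finset.mem_filter.1 hk).2
        have hs' : c ≤ m s := hs
        rcases hs'.trans hk' |>.lt_or_eq with hlt | heq
        · have h := (hg k).continuous.continuousAt.eventually (lt_mem_nhds hlt)
          exact (h.filter_mono nhdsWithin_le_nhds).mono fun x hx => hx.le
        · have hms : m s = c := le_antisymm (heq ▸ hk') hs'
          have hd := hineq s hs0 k
          rw [hms, ← heq, sub_self, abs_zero, add_zero] at hd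
          have hαc : α c < 0 := hα0 ▸ hmono hc
          have h := eventually_right_lt_of_deriv_pos (hg k s) (by linarith)
          exact h.mono fun x hx => (heq.trans_lt hx).le
      have hall := (Filter.eventually_all_finset _).2 hev
      refine hall.mono fun x hx => ?_
      refine (hiff c x).2 (((hiff (m s) s).1 le_rfl).trans (Finset.card_le_card fun k hk => ?_))
      exact Finset.mem_filter.2 ⟨Finset.mem_univ k, hx k hk⟩
    exact hsub ⟨ht, le_rfl⟩
  intro t ht
  have hmt : 0 ≤ m t := le_of_forall_lt_imp_le_of_dense fun c hc => key c hc t ht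
  exact ⟨hmt, (hiff 0 t).1 hmt⟩
end

section
/- (Nested logic safety, trajectory form of Theorem 2, two levels.) Let α : ℝ → ℝ be an extended class-K function, let g_1,…,g_p : ℝ → ℝ be differentiable, let I_1,…,I_q be nonempty subsets of {1,…,p}, and let integers r_i with 1 ≤ r_i ≤ |I_i| for each i and R with 1 ≤ R ≤ q be given. Define h_i¹(t) as the r_i-th largest value of {g_k(t) | k ∈ I_i} and the nested pivot h(t) as the R-th largest value of {h_i¹(t)}_{i=1}^q. Assume h(0) ≥ 0 and that for all t ≥ 0 and all k ∈ {1,…,p}: g_k'(t) ≥ −α( h(t) + |g_k(t) − h(t)| ). Then h(t) ≥ 0 for all t ≥ 0; equivalently, at every time t ≥ 0 there are at least R indices i such that at least r_i indices k ∈ I_i satisfy g_k(t) ≥ 0. -/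
/-!
Write `N t c` for the statement that at least `R` groups `i` have at least `r i` members `k` with
`c ≤ g k t`. Counting gives `c ≤ h t ↔ N t c` (`le_kthLargestM_iff` at both levels), and `N` is
monotone in the set of indices `k` with `c ≤ g k t`.

For a level `c < 0`, the set of times with `c ≤ h t` contains `0` and is closed, because an index
with `g k t < c` stays below `c` nearby. It also extends to the right of each of its points `t`:
every `k` with `h t ≤ g k t` satisfies `c ≤ g k s` for `s > t` close to `t`. This is continuity when
`c < g k t`; otherwise `g k t = h t = c`, and the barrier condition reads
`deriv (g k) t ≥ -α c > 0`. Hence the set contains `[0, ∞)`, and letting `c ↑ 0` gives `0 ≤ h t`.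
No differentiability of the pivot `h` is needed.
-/

/-- The `r`-th largest element (1-indexed, counted with multiplicity) of a
finite multiset of reals: the `r`-th entry of the values sorted in
nonincreasing order. -/
noncomputable def kthLargestM (s : Multiset ℝ) (r : ℕ) : ℝ :=
  (s.sort (· ≤ ·)).getD (Multiset.card s - r) 0

open Filter Topology

lemma le_getD_sorted_iff (l : List ℝ) (hl : l.Pairwise (· ≤ ·)) (r : ℕ) (hr1 : 1 ≤ r)
    (hr2 : r ≤ l.length) (c : ℝ) :
    c ≤ l.getD (l.length - r) 0 ↔ r ≤ l.countP (fun x => decide (c ≤ x)) := by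
  have hj : l.length - r < l.length := by omega
  rw [List.getD_eq_getElem _ _ hj]
  rw [List.pairwise_iff_getElem] at hl
  constructor
  · intro hc
    have hall : (l.drop (l.length - r)).countP (fun x => decide (c ≤ x))
        = (l.drop (l.length - r)).length := by
      rw [List.countP_eq_length]
      intro a ha
      obtain ⟨n, hn, rfl⟩ := List.getElem_of_mem ha
      rw [List.getElem_drop]
      rw [List.length_drop] at hn
      rcases Nat.eq_zero_or_pos n with rfl | hpos
      · simpa using hc
      · simpa using hc.trans (hl _ _ hj (by omega) (by omega))
    have hsub := (List.drop_sublist (l.length - r) l).countP_le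
      (p := fun x => decide (c ≤ x))
    rw [hall, List.length_drop] at hsub
    omega
  · intro hr
    by_contra hc
    push Not at hc
    -- If the pivot is below `c`, so are the first `length - r + 1` entries.
    have hzero : (l.take (l.length - r + 1)).countP (fun x => decide (c ≤ x)) = 0 := by
      rw [List.countP_eq_zero]
      intro a ha
      obtain ⟨n, hn, rfl⟩ := List.getElem_of_mem ha
      rw [List.getElem_take]
      rw [List.length_take] at hn
      rcases Nat.lt_or_ge n (l.length - r) with hlt | hge
      · simpa using (hl _ _ (by omega) hj hlt).trans_lt hc
      · have hn' : n = l.length - r := by omega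
        subst hn'
        simpa using hc
    have hsplit : l.countP (fun x => decide (c ≤ x))
        = (l.take (l.length - r + 1)).countP (fun x => decide (c ≤ x))
          + (l.drop (l.length - r + 1)).countP (fun x => decide (c ≤ x)) := by
      rw [← List.countP_append, List.take_append_drop]
    have hle := List.countP_le_length (p := fun x => decide (c ≤ x))
      (l := l.drop (l.length - r + 1))
    rw [List.length_drop] at hle
    omega

/-- The counting characterization of the `r`-th largest value. -/
lemma le_kthLargestM_iff {ι : Type*} (s : Finset ι) (f : ι → ℝ) (r : ℕ) (hr1 : 1 ≤ r)
    (hr2 : r ≤ s.card) (c : ℝ) :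
    c ≤ kthLargestM (s.val.map f) r ↔ r ≤ (s.filter (fun k => c ≤ f k)).card := by
  have hlen : ((s.val.map f).sort (· ≤ ·)).length = Multiset.card (s.val.map f) :=
    Multiset.length_sort _
  have hcard : Multiset.card (s.val.map f) = s.card := by simp
  have key := le_getD_sorted_iff ((s.val.map f).sort (· ≤ ·)) (Multiset.pairwise_sort _ _)
    r hr1 (by omega) c
  rw [hlen] at key
  rw [kthLargestM, key, ← Multiset.coe_countP, Multiset.sort_eq, Multiset.countP_map]
  rfl

/-- A function with positive derivative at `t` exceeds its value at `t` just to the right. -/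
lemma eventually_le_right_of_deriv_pos {f : ℝ → ℝ} {t : ℝ} (hf : DifferentiableAt ℝ f t)
    (hpos : 0 < deriv f t) : ∀ᶠ s in 𝓝[>] t, f t ≤ f s := by
  have hslope := hf.hasDerivAt.tendsto_slope.eventually_const_lt hpos
  have hmono : 𝓝[>] t ≤ 𝓝[≠] t := nhdsWithin_mono _ fun x hx => ne_of_gt hx
  filter_upwards [hmono hslope, self_mem_nhdsWithin] with s hs hts
  have hts' : 0 < s - t := sub_pos.2 hts
  rw [slope_def_field, div_pos_iff_of_pos_right hts'] at hs
  linarith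

/-- Nested logic safety (trajectory form of Theorem 2, two levels): under
the nested combinatorial CBF condition enforced on the primitives with the
single nested pivot `h`, if `h(0) ≥ 0` then `h(t) ≥ 0` for all `t ≥ 0`;
equivalently, at every time at least `R` groups have at least `r_i` of
their primitives nonnegative. -/
theorem nested_logic_safety {p q : ℕ}
    (α : ℝ → ℝ) (hα : IsClassKe α)
    (g : Fin p → ℝ → ℝ) (hg : ∀ k, Differentiable ℝ (g k))
    (I : Fin q → Finset (Fin p)) (hI : ∀ i, (I i).Nonempty)
    (r : Fin q → ℕ) (hr1 : ∀ i, 1 ≤ r i) (hr2 : ∀ i, r i ≤ (I i).card)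
    (R : ℕ) (hR1 : 1 ≤ R) (hRq : R ≤ q)
    (h1 : Fin q → ℝ → ℝ)
    (hh1 : ∀ i t, h1 i t = kthLargestM ((I i).val.map (fun k => g k t)) (r i))
    (h : ℝ → ℝ)
    (hh : ∀ t, h t = kthLargestM (Finset.univ.val.map (fun i => h1 i t)) R)
    (h0 : 0 ≤ h 0)
    (hineq : ∀ t, 0 ≤ t → ∀ k : Fin p,
      -α (h t + |g k t - h t|) ≤ deriv (g k) t) :
    ∀ t, 0 ≤ t →
      0 ≤ h t ∧
      R ≤ (Finset.univ.filter (fun i : Fin q =>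
        r i ≤ ((I i).filter (fun k => 0 ≤ g k t)).card)).card := by
  obtain ⟨-, hαmono, hα0⟩ := hα
  have hiff : ∀ t c, c ≤ h t ↔ R ≤ (Finset.univ.filter (fun i : Fin q =>
      r i ≤ ((I i).filter (fun k => c ≤ g k t)).card)).card := by
    intro t c
    rw [hh, le_kthLargestM_iff _ _ _ hR1 (by simpa using hRq)]
    simp only [hh1, le_kthLargestM_iff _ _ _ (hr1 _) (hr2 _)]
  have hmono : ∀ t s c d, (∀ k, c ≤ g k t → d ≤ g k s) → c ≤ h t → d ≤ h s := by
    intro t s c d hk hc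
    rw [hiff] at hc ⊢
    refine hc.trans (Finset.card_le_card ?_)
    refine Finset.monotone_filter_right _ fun i _ hi => ?_
    exact le_trans hi (Finset.card_le_card
      (Finset.monotone_filter_right _ fun k _ => hk k))
  have hlevel : ∀ c < 0, ∀ T, 0 ≤ T → c ≤ h T := by
    intro c hc T hT
    have hclosed : IsClosed {t | c ≤ h t} := by
      rw [← isOpen_compl_iff, isOpen_iff_mem_nhds]
      intro t ht
      have hev : ∀ᶠ s in 𝓝 t, ∀ k, c ≤ g k s → c ≤ g k t := by
        rw [eventually_all]
        intro k
        by_cases hk : c ≤ g k t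
        · exact Eventually.of_forall fun _ _ => hk
        · push Not at hk
          filter_upwards [(hg k).continuous.continuousAt.eventually_lt_const hk] with s hs hcs
          exact absurd hcs (not_le.2 hs)
      filter_upwards [hev] with s hs hcs
      exact ht (hmono s t c c hs hcs)
    refine (hclosed.inter isClosed_Icc).Icc_subset_of_forall_exists_gt
      (a := 0) (b := T) (hc.le.trans h0) ?_ ⟨hT, le_rfl⟩
    rintro t ⟨htc, ht0, -⟩ y hy
    have htc : c ≤ h t := htc
    have hev : ∀ᶠ s in 𝓝[>] t, ∀ k, h t ≤ g k t → c ≤ g k s := by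
      rw [eventually_all]
      intro k
      by_cases hk : c < g k t
      · filter_upwards [nhdsWithin_le_nhds
          ((hg k).continuous.continuousAt.eventually_const_lt hk)] with s hs _
        exact le_of_lt hs
      · push Not at hk
        by_cases hkt : h t ≤ g k t
        · -- Here `g k t = h t = c`, so the barrier condition forces a positive derivative.
          have hgc : g k t = c := le_antisymm hk (htc.trans hkt)
          have hhc : h t = c := le_antisymm (hkt.trans hk) htc
          have hd := hineq t ht0 k
          rw [hgc, hhc, sub_self, abs_zero, add_zero] at hd
          have hαc : α c < 0 := hα0 ▸ hαmono hc
          filter_upwards [eventually_le_right_of_deriv_pos (hg k t) (by linarith)] with s hs _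
          exact hgc ▸ hs
        · exact Eventually.of_forall fun _ hk' => absurd hk' hkt
    obtain ⟨s, hs, hsy⟩ := (hev.and (Ioc_mem_nhdsGT hy)).exists
    exact ⟨s, hmono t s (h t) c hs le_rfl, hsy⟩
  intro t ht
  have hpos : 0 ≤ h t := le_of_forall_lt_imp_le_of_dense fun c hc => hlevel c hc t ht
  exact ⟨hpos, (hiff t 0).1 hpos⟩
end
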